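/- Let n ≥ 1, let i₀ ∈ {1, …, n}, let θ = (θ₁, …, θₙ) : ℝⁿ → ℝⁿ be a smooth map with Reg(θ) dense in ℝⁿ, and let λ ∈ ℝ. Define Φ_λ = (θ, ½Σᵢ₌₁ⁿ θᵢ² + λθ_{i₀}², b) where bᵢ = θᵢ for i ≠ i₀ and b_{i₀} = (1 + 2λ)θ_{i₀}. Then Φ_λ satisfies the creative condition; if λ ≠ −1/2 then Φ_λ ∈ GX (the Jacobian determinant of b is (1 + 2λ) times that of θ); and if λ ≠ 0 then Φ_λ ∉ GY. -/

import Mathlib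

open scoped BigOperators

/-- Triples `(θ, a, b)` encoding maps `ℝⁿ → ℝ^{2n+1}`. -/
abbrev TripleMap (n : ℕ) :=
  ((Fin n → ℝ) → Fin n → ℝ) × ((Fin n → ℝ) → ℝ) × ((Fin n → ℝ) → Fin n → ℝ)

/-- All three components are `C^∞`. -/
def SmoothTriple (n : ℕ) (Φ : TripleMap n) : Prop :=
  ContDiff ℝ (⊤ : ℕ∞) Φ.1 ∧ ContDiff ℝ (⊤ : ℕ∞) Φ.2.1 ∧ ContDiff ℝ (⊤ : ℕ∞) Φ.2.2

/-- The creative condition (*): `da = ∑ᵢ bᵢ dθᵢ`. -/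
def Creative (n : ℕ) (Φ : TripleMap n) : Prop :=
  ∀ x v : Fin n → ℝ,
    fderiv ℝ Φ.2.1 x v = ∑ i, Φ.2.2 x i * fderiv ℝ (fun y => Φ.1 y i) x v

/-- `RegPts f` is the set of regular points of `f : ℝⁿ → ℝⁿ`, i.e. points where
the differential is invertible. -/
def RegPts (n : ℕ) (f : (Fin n → ℝ) → Fin n → ℝ) : Set (Fin n → ℝ) :=
  {x | Function.Bijective (fderiv ℝ f x)}

/-- `X`: smooth triples satisfying the creative condition. -/
def Xset (n : ℕ) : Set (TripleMap n) := {Φ | SmoothTriple n Φ ∧ Creative n Φ}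

/-- `GX`: elements of `X` such that `Reg θ` and `Reg b` are dense. -/
def GXset (n : ℕ) : Set (TripleMap n) :=
  {Φ | SmoothTriple n Φ ∧ Creative n Φ ∧ Dense (RegPts n Φ.1) ∧ Dense (RegPts n Φ.2.2)}

/-- `Y`: triples of the form `(θ, ½∑θᵢ², θ)` with `θ` smooth. -/
def Yset (n : ℕ) : Set (TripleMap n) :=
  {Φ | ∃ θ : (Fin n → ℝ) → Fin n → ℝ, ContDiff ℝ (⊤ : ℕ∞) θ ∧
    Φ = (θ, fun x => (1 / 2) * ∑ i, θ x i ^ 2, θ)}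

/-- `GY`: triples of the form `(θ, ½∑θᵢ², θ)` with `θ` smooth and `Reg θ` dense. -/
def GYset (n : ℕ) : Set (TripleMap n) :=
  {Φ | ∃ θ : (Fin n → ℝ) → Fin n → ℝ, ContDiff ℝ (⊤ : ℕ∞) θ ∧ Dense (RegPts n θ) ∧
    Φ = (θ, fun x => (1 / 2) * ∑ i, θ x i ^ 2, θ)}

/-- The Legendre involution `L(θ, a, b) = (b, ∑ᵢ bᵢθᵢ − a, θ)`. -/
def Legendre (n : ℕ) (Φ : TripleMap n) : TripleMap n :=
  (Φ.2.2, fun x => (∑ i, Φ.2.2 x i * Φ.1 x i) - Φ.2.1 x, Φ.1)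

/-- Packing a triple `(θ, a, b)` into a single map `ℝⁿ → ℝ^{2n+1}`
(realized as `ℝⁿ × ℝ × ℝⁿ`). -/
def packTriple (n : ℕ) (Φ : TripleMap n) : (Fin n → ℝ) → (Fin n → ℝ) × ℝ × (Fin n → ℝ) :=
  fun x => (Φ.1 x, Φ.2.1 x, Φ.2.2 x)

/-! Put `M = diag(1, …, 1 + 2λ, …, 1)`. Then `Φ_λ = (θ, ½⟨θ, Mθ⟩, Mθ)`, and nothing but the symmetry
of `M` matters: the creative condition is the product rule for `½⟨θ, Mθ⟩`; the differential of
`Mθ` is `M ∘ dθ`, so at the regular points of `θ` it is invertible iff `det M ≠ 0`; and `Mθ = θ`,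
differentiated at a regular point of `θ`, forces `M = 1`. -/

section QuadraticTriples

open Matrix

section Calculus

variable {𝕜 E ι κ : Type*} [NontriviallyNormedField 𝕜] [NormedAddCommGroup E] [NormedSpace 𝕜 E]
  [Fintype ι] {f g : E → ι → 𝕜} {x : E}

/-- Multiplication by the matrix `M`, as a continuous linear map. It is built by hand, as
`LinearMap.toContinuousLinearMap` would require `𝕜` to be complete. -/
def mulVecCLM (M : Matrix κ ι 𝕜) : (ι → 𝕜) →L[𝕜] κ → 𝕜 :=
  ⟨M.mulVecLin, continuous_const.matrix_mulVec continuous_id⟩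

theorem hasFDerivAt_mulVec [Finite κ] (M : Matrix κ ι 𝕜) (hf : DifferentiableAt 𝕜 f x) :
    HasFDerivAt (fun y => M *ᵥ f y) (mulVecCLM M ∘L fderiv 𝕜 f x) x :=
  have := Fintype.ofFinite κ
  (mulVecCLM M).hasFDerivAt.comp x hf.hasFDerivAt

theorem fderiv_mulVec_apply [Finite κ] (M : Matrix κ ι 𝕜) (hf : DifferentiableAt 𝕜 f x) (v : E) :
    fderiv 𝕜 (fun y => M *ᵥ f y) x v = M *ᵥ fderiv 𝕜 f x v :=
  DFunLike.congr_fun (hasFDerivAt_mulVec M hf).fderiv v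

theorem fderiv_dotProduct_apply (hf : DifferentiableAt 𝕜 f x) (hg : DifferentiableAt 𝕜 g x)
    (v : E) :
    fderiv 𝕜 (fun y => f y ⬝ᵥ g y) x v = f x ⬝ᵥ fderiv 𝕜 g x v + fderiv 𝕜 f x v ⬝ᵥ g x := by
  have hmul (i : ι) :=
    (hasFDerivAt_pi'.1 hf.hasFDerivAt i).fun_mul (hasFDerivAt_pi'.1 hg.hasFDerivAt i)
  have hsum := HasFDerivAt.fun_sum (u := Finset.univ) fun i _ => hmul i
  simp [dotProduct, hsum.fderiv, Finset.sum_add_distrib, mul_comm]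

theorem contDiff_mulVec [Fintype κ] (M : Matrix κ ι 𝕜) {k : WithTop ℕ∞}
    (hf : ContDiff 𝕜 k f) : ContDiff 𝕜 k fun y => M *ᵥ f y :=
  (mulVecCLM M).contDiff.comp hf

theorem contDiff_dotProduct {k : WithTop ℕ∞} (hf : ContDiff 𝕜 k f) (hg : ContDiff 𝕜 k g) :
    ContDiff 𝕜 k fun y => f y ⬝ᵥ g y :=
  .sum fun i _ => (contDiff_pi.1 hf i).mul (contDiff_pi.1 hg i)

end Calculus

section ScaleCoord

variable {ι R : Type*} [DecidableEq ι] [CommRing R]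

/-- The matrix `diag(1, …, c, …, 1)` with `c` in position `i₀`, which multiplies the coordinate
`i₀` by `c` and fixes the others. -/
def scaleCoord (i₀ : ι) (c : R) : Matrix ι ι R :=
  diagonal (Function.update 1 i₀ c)

theorem isSymm_scaleCoord (i₀ : ι) (c : R) : (scaleCoord i₀ c).IsSymm :=
  isSymm_diagonal _

theorem scaleCoord_eq_one_iff {i₀ : ι} {c : R} : scaleCoord i₀ c = 1 ↔ c = 1 := by
  rw [scaleCoord, ← diagonal_one, diagonal_injective.eq_iff]
  exact Function.update_eq_self_iff

variable [Fintype ι]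

theorem det_scaleCoord (i₀ : ι) (c : R) : (scaleCoord i₀ c).det = c := by
  simp [scaleCoord, Finset.prod_update_of_mem]

theorem scaleCoord_mulVec (i₀ : ι) (c : R) (v : ι → R) :
    scaleCoord i₀ c *ᵥ v = fun i => if i = i₀ then c * v i₀ else v i := by
  ext i
  by_cases h : i = i₀ <;> simp [scaleCoord, mulVec_diagonal, h]

theorem dotProduct_scaleCoord_mulVec (i₀ : ι) (c : R) (v : ι → R) :
    v ⬝ᵥ scaleCoord i₀ c *ᵥ v = ∑ i, v i ^ 2 + (c - 1) * v i₀ ^ 2 := by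
  have hterm (i : ι) : v i * (if i = i₀ then c * v i₀ else v i) =
      v i ^ 2 + if i = i₀ then (c - 1) * v i₀ ^ 2 else 0 := by
    split_ifs with h
    · rw [h]; ring
    · ring
  simp only [scaleCoord_mulVec, dotProduct, hterm, Finset.sum_add_distrib, Finset.sum_ite_eq',
    Finset.mem_univ, if_true]

end ScaleCoord

variable {n : ℕ} {M : Matrix (Fin n) (Fin n) ℝ} {θ : (Fin n → ℝ) → Fin n → ℝ} {x : Fin n → ℝ}

theorem mem_regPts_iff_det_ne_zero : x ∈ RegPts n θ ↔ (fderiv ℝ θ x).det ≠ 0 := by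
  rw [← isUnit_iff_ne_zero, ContinuousLinearMap.det, ← LinearMap.isUnit_iff_isUnit_det,
    Module.End.isUnit_iff]
  rfl

theorem det_fderiv_mulVec (hθ : DifferentiableAt ℝ θ x) :
    (fderiv ℝ (fun y => M *ᵥ θ y) x).det = M.det * (fderiv ℝ θ x).det := by
  rw [(hasFDerivAt_mulVec M hθ).fderiv, ← LinearMap.det_toLin' M]
  exact LinearMap.det_comp (toLin' M) (fderiv ℝ θ x)

theorem mem_regPts_mulVec_iff (hθ : DifferentiableAt ℝ θ x) :
    x ∈ RegPts n (fun y => M *ᵥ θ y) ↔ M.det ≠ 0 ∧ x ∈ RegPts n θ := by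
  simp only [mem_regPts_iff_det_ne_zero, det_fderiv_mulVec hθ, mul_ne_zero_iff]

theorem dense_regPts_mulVec_iff (hθ : Differentiable ℝ θ) :
    Dense (RegPts n fun y => M *ᵥ θ y) ↔ M.det ≠ 0 ∧ Dense (RegPts n θ) := by
  constructor
  · intro h
    obtain ⟨x, hx⟩ := h.nonempty
    exact ⟨((mem_regPts_mulVec_iff (hθ x)).1 hx).1,
      h.mono fun y hy => ((mem_regPts_mulVec_iff (hθ y)).1 hy).2⟩
  · rintro ⟨hM, hreg⟩
    exact hreg.mono fun x hx => (mem_regPts_mulVec_iff (hθ x)).2 ⟨hM, hx⟩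

theorem eq_one_of_mulVec_comp_eq (hθ : DifferentiableAt ℝ θ x) (hx : x ∈ RegPts n θ)
    (h : (fun y => M *ᵥ θ y) = θ) : M = 1 := by
  refine ext_of_mulVec_single fun i => ?_
  obtain ⟨v, hv⟩ := hx.surjective (Pi.single i 1)
  rw [one_mulVec, ← hv, ← fderiv_mulVec_apply M hθ, h]

/-- The triple `(θ, ½⟨θ, Mθ⟩, Mθ)` attached to a square matrix `M`: the quadratic form `½⟨u, Mu⟩`
and, for symmetric `M`, its gradient, both evaluated along `u = θ`. -/
noncomputable def quadraticTriple (M : Matrix (Fin n) (Fin n) ℝ)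
    (θ : (Fin n → ℝ) → Fin n → ℝ) : TripleMap n :=
  (θ, fun x => (1 / 2) * (θ x ⬝ᵥ M *ᵥ θ x), fun x => M *ᵥ θ x)

theorem quadraticTriple_one :
    quadraticTriple 1 θ = (θ, fun x => (1 / 2) * ∑ i, θ x i ^ 2, θ) := by
  simp only [quadraticTriple, one_mulVec, dotProduct, sq]

theorem quadraticTriple_scaleCoord (i₀ : Fin n) (l : ℝ) :
    quadraticTriple (scaleCoord i₀ (1 + 2 * l)) θ =
      (θ, fun x => (1 / 2) * (∑ i, θ x i ^ 2) + l * θ x i₀ ^ 2,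
        fun x i => if i = i₀ then (1 + 2 * l) * θ x i₀ else θ x i) := by
  refine Prod.ext rfl (Prod.ext ?_ ?_) <;> funext x
  · simp only [quadraticTriple, dotProduct_scaleCoord_mulVec]
    ring
  · exact scaleCoord_mulVec i₀ (1 + 2 * l) (θ x)

theorem smoothTriple_quadraticTriple (hθ : ContDiff ℝ (⊤ : ℕ∞) θ) :
    SmoothTriple n (quadraticTriple M θ) :=
  have hMθ := contDiff_mulVec M hθ
  ⟨hθ, contDiff_const.mul (contDiff_dotProduct hθ hMθ), hMθ⟩

theorem creative_quadraticTriple (hM : M.IsSymm) (hθ : Differentiable ℝ θ) :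
    Creative n (quadraticTriple M θ) := by
  intro x v
  have hMθ : DifferentiableAt ℝ (fun y => M *ᵥ θ y) x :=
    (hasFDerivAt_mulVec M (hθ x)).differentiableAt
  have hsymm : θ x ⬝ᵥ M *ᵥ fderiv ℝ θ x v = M *ᵥ θ x ⬝ᵥ fderiv ℝ θ x v := by
    rw [dotProduct_mulVec, ← mulVec_transpose, hM.eq]
  calc fderiv ℝ (fun y => (1 / 2) * (θ y ⬝ᵥ M *ᵥ θ y)) x v
      = (1 / 2) * fderiv ℝ (fun y => θ y ⬝ᵥ M *ᵥ θ y) x v :=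
        DFunLike.congr_fun (congrFun (fderiv_const_smul_field (1 / 2 : ℝ)) x) v
    _ = (1 / 2) * (θ x ⬝ᵥ M *ᵥ fderiv ℝ θ x v + fderiv ℝ θ x v ⬝ᵥ M *ᵥ θ x) := by
        rw [fderiv_dotProduct_apply (hθ x) hMθ, fderiv_mulVec_apply M (hθ x)]
    _ = M *ᵥ θ x ⬝ᵥ fderiv ℝ θ x v := by
        rw [hsymm, dotProduct_comm (fderiv ℝ θ x v)]
        ring
    _ = ∑ i, (M *ᵥ θ x) i * fderiv ℝ (fun y => θ y i) x v :=
        Finset.sum_congr rfl fun i _ => by rw [fderiv_apply (hθ x) i]; rfl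

theorem quadraticTriple_mem_GXset_iff (hM : M.IsSymm) (hθ : ContDiff ℝ (⊤ : ℕ∞) θ) :
    quadraticTriple M θ ∈ GXset n ↔ M.det ≠ 0 ∧ Dense (RegPts n θ) := by
  have hd : Differentiable ℝ θ := hθ.differentiable (by simp)
  rw [← dense_regPts_mulVec_iff hd]
  exact ⟨fun h => h.2.2.2, fun h => ⟨smoothTriple_quadraticTriple hθ,
    creative_quadraticTriple hM hd, ((dense_regPts_mulVec_iff hd).1 h).2, h⟩⟩

theorem quadraticTriple_mem_GYset_iff (hθ : ContDiff ℝ (⊤ : ℕ∞) θ) :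
    quadraticTriple M θ ∈ GYset n ↔ M = 1 ∧ Dense (RegPts n θ) := by
  constructor
  · rintro ⟨η, -, hreg, h⟩
    obtain rfl : θ = η := congrArg (·.1) h
    obtain ⟨x, hx⟩ := hreg.nonempty
    have hMθ : (fun y => M *ᵥ θ y) = θ := congrArg (·.2.2) h
    exact ⟨eq_one_of_mulVec_comp_eq (hθ.differentiable (by simp) x) hx hMθ, hreg⟩
  · rintro ⟨rfl, hreg⟩
    exact ⟨θ, hθ, hreg, quadraticTriple_one⟩

theorem caseI_family_general (hM : M.IsSymm) (hθ : ContDiff ℝ (⊤ : ℕ∞) θ) :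
    Creative n (quadraticTriple M θ) ∧
    (∀ x, (fderiv ℝ (quadraticTriple M θ).2.2 x).det = M.det * (fderiv ℝ θ x).det) ∧
    (quadraticTriple M θ ∈ GXset n ↔ M.det ≠ 0 ∧ Dense (RegPts n θ)) ∧
    (quadraticTriple M θ ∈ GYset n ↔ M = 1 ∧ Dense (RegPts n θ)) :=
  have hd : Differentiable ℝ θ := hθ.differentiable (by simp)
  ⟨creative_quadraticTriple hM hd, fun x => det_fderiv_mulVec (hd x),
    quadraticTriple_mem_GXset_iff hM hθ, quadraticTriple_mem_GYset_iff hθ⟩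

end QuadraticTriples

/-- CASE I family in the proof of Theorem 2: for `θ` smooth with `Reg θ` dense, `i₀` and
`λ ∈ ℝ`, the triple `Φ_λ = (θ, ½∑ᵢθᵢ² + λθ_{i₀}², b)` with `bᵢ = θᵢ` for `i ≠ i₀` and
`b_{i₀} = (1 + 2λ)θ_{i₀}` satisfies the creative condition; the Jacobian determinant of
`b` is `(1 + 2λ)` times that of `θ`; if `λ ≠ −1/2` then `Φ_λ ∈ GX`; and if `λ ≠ 0`
then `Φ_λ ∉ GY`. -/
theorem caseI_family (n : ℕ) (hn : 1 ≤ n) (i₀ : Fin n) (l : ℝ)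
    (θ : (Fin n → ℝ) → Fin n → ℝ) (hθ : ContDiff ℝ (⊤ : ℕ∞) θ) (hreg : Dense (RegPts n θ)) :
    let a : (Fin n → ℝ) → ℝ := fun x => (1 / 2) * (∑ i, θ x i ^ 2) + l * θ x i₀ ^ 2
    let b : (Fin n → ℝ) → Fin n → ℝ :=
      fun x i => if i = i₀ then (1 + 2 * l) * θ x i₀ else θ x i
    Creative n (θ, a, b) ∧
    (∀ x, (fderiv ℝ b x).det = (1 + 2 * l) * (fderiv ℝ θ x).det) ∧
    (l ≠ -(1 / 2) → (θ, a, b) ∈ GXset n) ∧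
    (l ≠ 0 → (θ, a, b) ∉ GYset n) := by
  intro a b
  obtain ⟨hcreative, hdet, hGX, hGY⟩ :=
    caseI_family_general (isSymm_scaleCoord i₀ (1 + 2 * l)) hθ
  simp only [quadraticTriple_scaleCoord, det_scaleCoord, scaleCoord_eq_one_iff]
    at hcreative hdet hGX hGY
  exact ⟨hcreative, hdet, fun hl => hGX.2 ⟨fun h => hl (by linarith), hreg⟩,
    fun hl h => hl (by linarith [(hGY.1 h).1])⟩
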